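/- The Gessel excursion numbers satisfy the first-order linear recurrence (n+2)(3n+5)·g(2n+2;0,0) = 4(6n+5)(2n+1)·g(2n;0,0) for all n ∈ ℕ, with g(0;0,0) = 1. -/

import Mathlib

/-!
The proof follows Tutte's method of invariants. Let `Q(x, y) = ∑ g(n; i, j) x ^ i y ^ j t ^ n`.
Removing the last step of a walk gives the functional equation
`K Q = xy - t Q(x, 0) - t (1 + y) Q(0, y) + t Q(0, 0)` with kernel
`K = xy - t (1 + y) (1 + x² y)`. Modulo `K` there are two pairs of invariants, that is, of functions
of `x` alone that agree with functions of `y` alone: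

* `I₀(x) = (x + 1/x)/t - (x + 1/x)²` and `J₀(y) = (1 + y)²/y + y/(t² (1 + y)²) - 4`;
* `I₁(x) = t Q(x, 0) + 1/x` and `J₁(y) = y/(t (1 + y)) - t (1 + y) Q(0, y) + t Q(0, 0)`.

Constants `c, c', c''` (series in `t`) are chosen so that `I₁³ - c I₁² + (I₀ - c') I₁ - c''` has no
pole at `x = 0` and vanishes there. The difference of this expression and of its counterpart in
`J₀, J₁` is divisible by `K`, and this forces both to vanish (`invariant_lemma`), so that `Q(x, 0)`
and `Q(0, y)` are roots of explicit cubics (`cubic_equations`). Here `c t = 1 + 2 t² Q(0, 0)`;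
in the code `γ = c t`, `κ = c' t` and `η = c'' t`.

The derivatives of `I₀` at `x = ±1` and of `J₀` at `y = 1` vanish. Differentiating the cubics there
shows that each of the three specializations has a double root (`double_root_x`,
`double_root_y`). The three double roots, suitably scaled, are the roots of one and the same cubic
polynomial, and eliminating everything else leaves a system of two equations in two unknowns
(`algebraic_system`). The resulting curve is rational (`exists_uniformization`), and in terms of the
parameter `r` it is a short computation that `D = 1 + 2 t² Q(0, 0)` satisfies
`3 θ²D - 2 θD = 16 t² (3 θ²D - 4 θD + D)` with `θ = t d/dt` (`euler_equation`). Comparing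
coefficients of `t ^ (2n + 4)` gives the recurrence.

All identities are proved in rings of formal power series in `t` over `ℚ`, `ℚ[x]` (or `ℚ[y]`) and
`ℚ[x, y]`, after clearing denominators.
-/

noncomputable section

/-- The set of admissible steps for Gessel walks. -/
def gesselSteps : Set (ℤ × ℤ) := {(1, 0), (-1, 0), (1, 1), (-1, -1)}

/-- The position of the walk `w` after its first `k` steps. -/
def walkPos {n : ℕ} (w : Fin n → ℤ × ℤ) (k : ℕ) : ℤ × ℤ :=
  ∑ m ∈ Finset.univ.filter (fun m : Fin n => (m : ℕ) < k), w m

/-- `w` is a Gessel walk: every step is admissible and the walk (which starts at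
the origin) never leaves the first quadrant. -/
def IsGesselWalk {n : ℕ} (w : Fin n → ℤ × ℤ) : Prop :=
  (∀ m, w m ∈ gesselSteps) ∧ ∀ k ≤ n, 0 ≤ (walkPos w k).1 ∧ 0 ≤ (walkPos w k).2

/-- The number of Gessel walks of length `n` ending at `(i, j)`. -/
def g (n : ℕ) (i j : ℤ) : ℕ :=
  Nat.card {w : Fin n → ℤ × ℤ // IsGesselWalk w ∧ walkPos w n = (i, j)}

/-! ### The step-by-step recursion for Gessel walks -/

/-- The Gessel walks of length `n` ending at `p`. -/
def gesselWalksTo (n : ℕ) (p : ℤ × ℤ) : Set (Fin n → ℤ × ℤ) :=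
  {w | IsGesselWalk w ∧ walkPos w n = p}

lemma g_eq_ncard (n : ℕ) (i j : ℤ) : g n i j = (gesselWalksTo n (i, j)).ncard := rfl

lemma walkPos_snoc_of_le {n : ℕ} (w : Fin n → ℤ × ℤ) (s : ℤ × ℤ) {k : ℕ} (hk : k ≤ n) :
    walkPos (Fin.snoc w s : Fin (n + 1) → ℤ × ℤ) k = walkPos w k := by
  unfold walkPos
  rw [Finset.sum_filter, Finset.sum_filter, Fin.sum_univ_castSucc]
  simp [Nat.not_lt.mpr hk]

lemma walkPos_snoc_last {n : ℕ} (w : Fin n → ℤ × ℤ) (s : ℤ × ℤ) :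
    walkPos (Fin.snoc w s : Fin (n + 1) → ℤ × ℤ) (n + 1) = walkPos w n + s := by
  unfold walkPos
  rw [Finset.sum_filter, Finset.sum_filter, Fin.sum_univ_castSucc]
  congr 1
  · refine Finset.sum_congr rfl fun i _ => ?_
    simp [Nat.lt_succ_of_lt i.2]
  · simp

/-- Appending a step to a Gessel walk only adds the conditions on that step and on the new
endpoint. -/
lemma isGesselWalk_snoc {n : ℕ} (w : Fin n → ℤ × ℤ) (s : ℤ × ℤ) :
    IsGesselWalk (Fin.snoc w s : Fin (n + 1) → ℤ × ℤ) ↔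
      IsGesselWalk w ∧ s ∈ gesselSteps ∧ 0 ≤ (walkPos w n + s).1 ∧ 0 ≤ (walkPos w n + s).2 := by
  unfold IsGesselWalk
  constructor
  · rintro ⟨h1, h2⟩
    refine ⟨⟨fun m => ?_, fun k hk => ?_⟩, ?_, ?_⟩
    · simpa using h1 m.castSucc
    · simpa [walkPos_snoc_of_le w s hk] using h2 k (by omega)
    · simpa using h1 (Fin.last n)
    · rw [← walkPos_snoc_last]
      exact h2 (n + 1) le_rfl
  · rintro ⟨⟨h1, h2⟩, hs, h3⟩
    refine ⟨fun m => ?_, fun k hk => ?_⟩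
    · refine Fin.lastCases ?_ (fun i => ?_) m
      · simpa using hs
      · simpa using h1 i
    · rcases Nat.lt_or_ge n k with h | h
      · obtain rfl : k = n + 1 := by omega
        rw [walkPos_snoc_last]
        exact h3
      · rw [walkPos_snoc_of_le w s h]
        exact h2 k h

lemma snoc_right_injective (n : ℕ) (s : ℤ × ℤ) :
    Function.Injective fun w : Fin n → ℤ × ℤ => (Fin.snoc w s : Fin (n + 1) → ℤ × ℤ) := by
  intro w w' h
  have := congrArg (Fin.init (α := fun _ => ℤ × ℤ)) h
  simpa using this

lemma gesselWalksTo_succ (n : ℕ) (i j : ℤ) (hi : 0 ≤ i) (hj : 0 ≤ j) :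
    gesselWalksTo (n + 1) (i, j) =
      ⋃ s ∈ gesselSteps, (fun w : Fin n → ℤ × ℤ => (Fin.snoc w s : Fin (n + 1) → ℤ × ℤ)) ''
        gesselWalksTo n ((i, j) - s) := by
  ext w
  simp only [Set.mem_iUnion, Set.mem_image, gesselWalksTo, Set.mem_ofPred_eq, exists_prop]
  constructor
  · rintro ⟨h1, h2⟩
    have hw : (Fin.snoc (Fin.init w) (w (Fin.last n)) : Fin (n + 1) → ℤ × ℤ) = w :=
      Fin.snoc_init_self w
    rw [← hw, isGesselWalk_snoc] at h1
    rw [← hw, walkPos_snoc_last] at h2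
    exact ⟨w (Fin.last n), h1.2.1, Fin.init w, ⟨h1.1, eq_sub_of_add_eq h2⟩, hw⟩
  · rintro ⟨s, hs, w, ⟨h1, h2⟩, rfl⟩
    rw [isGesselWalk_snoc, walkPos_snoc_last, h2, sub_add_cancel]
    exact ⟨⟨h1, hs, hi, hj⟩, rfl⟩

lemma gesselWalksTo_finite (n : ℕ) (p : ℤ × ℤ) : (gesselWalksTo n p).Finite := by
  have hfin : gesselSteps.Finite := by
    unfold gesselSteps
    exact Set.toFinite _
  exact (Set.Finite.pi' fun _ : Fin n => hfin).subset fun w hw => hw.1.1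

/-- The recursion according to the last step of a walk. -/
lemma g_succ (n : ℕ) (i j : ℤ) (hi : 0 ≤ i) (hj : 0 ≤ j) :
    g (n + 1) i j = g n (i - 1) j + g n (i + 1) j + g n (i - 1) (j - 1) + g n (i + 1) (j + 1) := by
  have hdisj : ∀ {s s' : ℤ × ℤ} (_ : s ≠ s') (A B : Set (Fin n → ℤ × ℤ)),
      Disjoint ((fun w => (Fin.snoc w s : Fin (n + 1) → ℤ × ℤ)) '' A)
        ((fun w => (Fin.snoc w s' : Fin (n + 1) → ℤ × ℤ)) '' B) := by
    intro s s' hs A B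
    rw [Set.disjoint_left]
    rintro _ ⟨w, _, rfl⟩ ⟨w', _, h⟩
    apply hs
    have := congrFun h (Fin.last n)
    simpa using this.symm
  have hf := fun (s p : ℤ × ℤ) => (gesselWalksTo_finite n p).image
    (fun w => (Fin.snoc w s : Fin (n + 1) → ℤ × ℤ))
  rw [g_eq_ncard, gesselWalksTo_succ n i j hi hj]
  simp only [gesselSteps, Set.mem_insert_iff, Set.mem_singleton_iff, Set.iUnion_iUnion_eq_or_left,
    Set.iUnion_iUnion_eq_left]
  rw [Set.ncard_union_eq _ (hf _ _) ((hf _ _).union ((hf _ _).union (hf _ _))),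
    Set.ncard_union_eq _ (hf _ _) ((hf _ _).union (hf _ _)),
    Set.ncard_union_eq _ (hf _ _) (hf _ _)]
  · simp only [Set.ncard_image_of_injective _ (snoc_right_injective n _), g_eq_ncard, Prod.mk_sub_mk,
      sub_zero, sub_neg_eq_add]
    ring
  · exact hdisj (by decide) _ _
  · simp only [Set.disjoint_union_right]
    exact ⟨hdisj (by decide) _ _, hdisj (by decide) _ _⟩
  · simp only [Set.disjoint_union_right]
    exact ⟨hdisj (by decide) _ _, hdisj (by decide) _ _, hdisj (by decide) _ _⟩

lemma g_of_neg (n : ℕ) (i j : ℤ) (h : i < 0 ∨ j < 0) : g n i j = 0 := by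
  rw [g_eq_ncard]
  have : gesselWalksTo n (i, j) = ∅ := by
    ext w
    simp only [gesselWalksTo, Set.mem_ofPred_eq, Set.mem_empty_iff_false, iff_false, not_and]
    intro hw hp
    have := hw.2 n le_rfl
    rw [hp] at this
    simp only at this
    omega
  simp [this]

lemma g_zero (i j : ℤ) : g 0 i j = if i = 0 ∧ j = 0 then 1 else 0 := by
  rw [g_eq_ncard]
  split_ifs with h
  · rw [Set.ncard_eq_one]
    refine ⟨Fin.elim0, ?_⟩
    ext w
    simp only [gesselWalksTo, Set.mem_ofPred_eq, Set.mem_singleton_iff]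
    constructor
    · intro _
      exact Subsingleton.elim _ _
    · rintro rfl
      obtain ⟨rfl, rfl⟩ := h
      simp [IsGesselWalk, walkPos, Prod.ext_iff]
  · have : gesselWalksTo 0 (i, j) = ∅ := by
      ext w
      simp only [gesselWalksTo, Set.mem_ofPred_eq, Set.mem_empty_iff_false, iff_false, not_and]
      intro _ hp
      simp [walkPos, Prod.ext_iff] at hp
      omega
    simp [this]

/-- Each coordinate grows by at most one per step. -/
lemma g_of_lt (n : ℕ) : ∀ i j : ℤ, ((n : ℤ) < i ∨ (n : ℤ) < j) → g n i j = 0 := by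
  induction n with
  | zero =>
    intro i j h
    rw [g_zero, if_neg]
    simp only [Nat.cast_zero] at h
    omega
  | succ n ih =>
    intro i j h
    push_cast at h
    by_cases hneg : i < 0 ∨ j < 0
    · exact g_of_neg _ _ _ hneg
    · rw [g_succ n i j (by omega) (by omega), ih _ _ (by omega), ih _ _ (by omega),
        ih _ _ (by omega), ih _ _ (by omega)]

/-! ### Generating polynomials and the functional equation -/

open Polynomial in
/-- The generating polynomial of walks of length `n` by endpoint: `x` is the inner and `y` the outer
variable of `ℚ[X][X]`. -/
def walkPoly (n : ℕ) : ℚ[X][X] :=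
  ∑ j ∈ Finset.range (n + 1), ∑ i ∈ Finset.range (n + 1),
    monomial j (monomial i (g n i j : ℚ))

lemma coeff_walkPoly (n i j : ℕ) : ((walkPoly n).coeff j).coeff i = g n i j := by
  unfold walkPoly
  simp only [Polynomial.finsetSum_coeff, Polynomial.coeff_monomial]
  rw [Finset.sum_eq_single j]
  · simp only [if_true, Polynomial.coeff_monomial]
    rw [Finset.sum_eq_single i]
    · simp
    · intro b _ hb
      simp [hb]
    · intro h
      rw [Finset.mem_range] at h
      rw [g_of_lt n i j (by omega)]
      simp
  · intro b _ hb
    simp [hb]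
  · intro h
    rw [Finset.mem_range] at h
    simp only [if_true, Polynomial.coeff_monomial]
    refine Finset.sum_eq_zero fun b _ => ?_
    rw [g_of_lt n b j (by omega)]
    simp

open Polynomial in
lemma walkPoly_zero : walkPoly 0 = 1 := by
  simp [walkPoly, g_zero]

open Polynomial in
/-- Removing the last step of a walk. After multiplication by `xy` the step set becomes
`(1 + y) (1 + x² y)`; the subtracted terms remove the steps that leave the quadrant. -/
lemma walkPoly_succ (n : ℕ) :
    C X * X * walkPoly (n + 1) = (1 + X) * (1 + C X ^ 2 * X) * walkPoly n
      - (1 + X) * ((walkPoly n).map (evalRingHom 0)).map C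
      - C ((walkPoly n).coeff 0) + C (C (g n 0 0 : ℚ)) := by
  have e1 : C X * X * walkPoly (n + 1) = X * (C X * walkPoly (n + 1)) := by ring
  have e2 : (1 + X) * (1 + C X ^ 2 * X) * walkPoly n = walkPoly n + X * walkPoly n
    + X * (C (X ^ 2) * walkPoly n) + X * (X * (C (X ^ 2) * walkPoly n)) := by
    simp only [map_pow]; ring
  have e3 : (1 + X) * ((walkPoly n).map (evalRingHom 0)).map C
    = ((walkPoly n).map (evalRingHom 0)).map C + X * ((walkPoly n).map (evalRingHom 0)).map C := by
    ring
  rw [e1, e2, e3]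
  ext j i
  have hev : ∀ p : ℚ[X], eval 0 p = p.coeff 0 := fun p => (coeff_zero_eq_eval_zero p).symm
  have hg : ∀ i j : ℕ, (g (n + 1) i j : ℚ) = g n (i - 1) j + g n (i + 1) j
      + g n (i - 1) (j - 1) + g n (i + 1) (j + 1) := fun i j => by
    rw [g_succ n i j (by positivity) (by positivity)]
    push_cast
    rfl
  have hneg : ∀ i : ℤ, g n (-1) i = 0 := fun i => g_of_neg n _ _ (Or.inl (by norm_num))
  have hneg' : ∀ i : ℤ, g n i (-1) = 0 := fun i => g_of_neg n _ _ (Or.inr (by norm_num))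
  rcases j with _ | _ | j <;> rcases i with _ | _ | i
  all_goals
    simp only [coeff_add, coeff_sub, coeff_X_mul, coeff_X_mul_zero, coeff_C_mul,
      coeff_X_pow_mul', coeff_C, coeff_walkPoly, hev, coeff_map, coe_evalRingHom, hg, coeff_zero]
    simp [coeff_walkPoly, hneg, hneg']
    try ring

/-! ### Power series rings and the invariant lemma -/

open Polynomial in
/-- A series in `t` with coefficients in `ℚ[x]`, viewed in `ℚ[x, y]⟦t⟧`. -/
def embX : PowerSeries ℚ[X] →+* PowerSeries ℚ[X][X] := PowerSeries.map C

open Polynomial in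
/-- A series in `t` with coefficients in `ℚ[y]`, viewed in `ℚ[x, y]⟦t⟧`. -/
def embY : PowerSeries ℚ[X] →+* PowerSeries ℚ[X][X] := PowerSeries.map (mapRingHom C)

open Polynomial in
/-- A series in `t` with rational coefficients, viewed as a series over the polynomial ring. -/
def embT : PowerSeries ℚ →+* PowerSeries ℚ[X] := PowerSeries.map C

open Polynomial in
/-- Evaluation of the polynomial variable at `r`, coefficientwise in `t`. -/
def evalSeries (r : ℚ) : PowerSeries ℚ[X] →+* PowerSeries ℚ := PowerSeries.map (evalRingHom r)

local notation "𝐭" => PowerSeries.X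
local notation "𝐯" => (PowerSeries.C (Polynomial.X : Polynomial ℚ) : PowerSeries (Polynomial ℚ))
local notation "𝐱" => embX 𝐯
local notation "𝐲" => embY 𝐯

@[simp] lemma embX_t : embX 𝐭 = 𝐭 := PowerSeries.map_X _
@[simp] lemma embY_t : embY 𝐭 = 𝐭 := PowerSeries.map_X _
@[simp] lemma embT_t : embT 𝐭 = 𝐭 := PowerSeries.map_X _
@[simp] lemma evalSeries_t (r : ℚ) : evalSeries r 𝐭 = 𝐭 := PowerSeries.map_X _

@[simp] lemma evalSeries_v (r : ℚ) : evalSeries r 𝐯 = PowerSeries.C r := by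
  simp [evalSeries]

@[simp] lemma evalSeries_embT (r : ℚ) (f : PowerSeries ℚ) : evalSeries r (embT f) = f := by
  ext n
  simp [evalSeries, embT]

lemma embX_embT (f : PowerSeries ℚ) : embX (embT f) = embY (embT f) := by
  ext n : 1
  simp [embX, embY, embT]

lemma x_eq : 𝐱 = PowerSeries.C (Polynomial.C Polynomial.X) := by simp [embX]
lemma y_eq : 𝐲 = PowerSeries.C Polynomial.X := by simp [embY]

/-- Coefficientwise division with remainder by `p`, where `e` is reduction modulo `p` and `s` is a
section of `e`. -/
lemma exists_eq_add_mul {B B' : Type*} [CommRing B] [CommRing B'] (e : B →+* B') (s : B' →+* B)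
    (p : B) (h : ∀ b, p ∣ b - s (e b)) (f : PowerSeries B) :
    ∃ f₁, f = PowerSeries.map s (PowerSeries.map e f) + PowerSeries.C p * f₁ := by
  choose q hq using h
  refine ⟨PowerSeries.mk fun n => q (PowerSeries.coeff n f), ?_⟩
  ext n
  simp [PowerSeries.coeff_C_mul, ← hq]

/-- Expansion to first order at the point `r` of the polynomial variable. -/
lemma exists_eq_eval_add (r : ℚ) (f : PowerSeries (Polynomial ℚ)) :
    ∃ f₁, f = embT (evalSeries r f) + (𝐯 - embT (PowerSeries.C r)) * f₁ := by
  obtain ⟨f₁, h⟩ := exists_eq_add_mul (Polynomial.evalRingHom r) Polynomial.C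
    (Polynomial.X - Polynomial.C r) (fun b => by
      rw [Polynomial.dvd_iff_isRoot]; simp) f
  refine ⟨f₁, ?_⟩
  simpa [embT, evalSeries] using h

/-- If `p` divides `N * H` and `N` is nonzero modulo the prime `p`, then `p` divides `H`, so that `p`
can be cancelled from `p * G = N * H`. -/
lemma exists_of_mul_eq {B B' : Type*} [CommRing B] [CommRing B'] [IsDomain B'] [IsDomain B]
    (e : B →+* B') (s : B' →+* B)
    (p : B) (hp : p ≠ 0) (h : ∀ b, p ∣ b - s (e b)) (hep : e p = 0) (N G H : PowerSeries B)
    (hN : PowerSeries.map e N ≠ 0) (hG : PowerSeries.C p * G = N * H) :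
    ∃ H₁, H = PowerSeries.C p * H₁ ∧ G = N * H₁ := by
  obtain ⟨H₁, h₁⟩ := exists_eq_add_mul e s p h H
  have h0 : PowerSeries.map e H = 0 := by
    have := congrArg (PowerSeries.map e) hG
    rw [map_mul, map_mul, PowerSeries.map_C, hep, map_zero, zero_mul] at this
    exact (mul_eq_zero.mp this.symm).resolve_left hN
  rw [h0, map_zero, zero_add] at h₁
  refine ⟨H₁, h₁, ?_⟩
  have hp' : (PowerSeries.C p : PowerSeries B) ≠ 0 := by
    rwa [Ne, map_eq_zero_iff _ PowerSeries.C_injective]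
  apply mul_left_cancel₀ hp'
  rw [hG, h₁]
  ring

/-- The kernel `xy - t (1 + y) (1 + x² y)` of the functional equation. -/
def kernelSeries : PowerSeries (Polynomial (Polynomial ℚ)) :=
  𝐱 * 𝐲 - 𝐭 * (1 + 𝐲) * (1 + 𝐱 ^ 2 * 𝐲)

/-- A factor `x` can be cancelled from a multiple of the kernel, since the kernel is nonzero at
`x = 0`. -/
lemma exists_of_x_mul_eq (G H : PowerSeries (Polynomial (Polynomial ℚ)))
    (h : 𝐱 * G = kernelSeries * H) : ∃ H₁, G = kernelSeries * H₁ := by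
  rw [x_eq] at h
  obtain ⟨H₁, -, h₁⟩ := exists_of_mul_eq (Polynomial.mapRingHom (Polynomial.evalRingHom (0 : ℚ)))
    (Polynomial.mapRingHom Polynomial.C) (Polynomial.C Polynomial.X) (by simp) (fun b => by
      rw [Polynomial.C_dvd_iff_dvd_coeff]
      intro i
      rw [Polynomial.X_dvd_iff]
      simp [Polynomial.coeff_zero_eq_eval_zero]) (by simp) _ G H (by
      intro h0
      have := congrArg (fun f => Polynomial.coeff (PowerSeries.coeff 1 f) 0) h0
      simp [kernelSeries, x_eq, y_eq, mul_assoc] at this) h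
  exact ⟨H₁, h₁⟩

/-- A factor `y` can be cancelled from a multiple of the kernel, since the kernel is nonzero at
`y = 0`. -/
lemma exists_of_y_mul_eq (G H : PowerSeries (Polynomial (Polynomial ℚ)))
    (h : 𝐲 * G = kernelSeries * H) : ∃ H₁, G = kernelSeries * H₁ := by
  rw [y_eq] at h
  obtain ⟨H₁, -, h₁⟩ := exists_of_mul_eq (Polynomial.evalRingHom (0 : Polynomial ℚ))
    Polynomial.C Polynomial.X (by simp) (fun b => by
      rw [Polynomial.X_dvd_iff]
      simp [Polynomial.coeff_zero_eq_eval_zero]) (by simp) _ G H (by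
      intro h0
      have := congrArg (fun f => (PowerSeries.coeff 1 f)) h0
      simp [kernelSeries, x_eq, y_eq, mul_assoc] at this) h
  exact ⟨H₁, h₁⟩

/-- The case `t = 0` of the invariant lemma: setting `y = 0` shows that `α` is constant, hence zero,
and setting `x = 0` then shows that `β` is zero. -/
lemma invariant_step (α β : Polynomial ℚ) (h : Polynomial (Polynomial ℚ)) (hα : α.eval 0 = 0)
    (H : (1 + Polynomial.X) ^ 3 * Polynomial.C α - β.map Polynomial.C
      = Polynomial.C Polynomial.X * Polynomial.X * h) : α = 0 ∧ β = 0 ∧ h = 0 := by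
  have h1 : α = Polynomial.C (β.eval 0) := by
    have := congrArg (Polynomial.eval 0) H
    simp only [Polynomial.eval_sub, Polynomial.eval_mul, Polynomial.eval_pow, Polynomial.eval_add,
      Polynomial.eval_one, Polynomial.eval_X, Polynomial.eval_C, mul_zero, zero_mul] at this
    have e : Polynomial.eval 0 (β.map Polynomial.C) = Polynomial.C (β.eval 0) := by
      rw [← Polynomial.coeff_zero_eq_eval_zero, ← Polynomial.coeff_zero_eq_eval_zero]
      simp
    rw [e] at this
    linear_combination this
  have hα0 : α = 0 := by
    rw [h1] at hα ⊢
    simpa using hα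
  subst hα0
  have hβ : β = 0 := by
    have := congrArg (Polynomial.map (Polynomial.evalRingHom (0 : ℚ))) H
    simpa [Polynomial.map_map] using this
  subst hβ
  refine ⟨rfl, rfl, ?_⟩
  have : Polynomial.C Polynomial.X * Polynomial.X * h = 0 := by rw [← H]; simp
  simpa using this

/-- If `(1 + y)³ A(x) - B(y)` is divisible by the kernel and `A(0) = 0`, then `A = B = 0`. Modulo `t`
the kernel is `xy`, so the coefficients of `t ^ n` vanish one after the other by
`invariant_step`. -/
lemma invariant_lemma (A B : PowerSeries (Polynomial ℚ))
    (H : PowerSeries (Polynomial (Polynomial ℚ)))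
    (hA : evalSeries 0 A = 0)
    (h : (1 + 𝐲) ^ 3 * embX A - embY B = kernelSeries * H) : A = 0 ∧ B = 0 := by
  have hA' : ∀ n, (PowerSeries.coeff n A).eval 0 = 0 := fun n => by
    have := congrArg (PowerSeries.coeff n) hA
    simpa [evalSeries] using this
  have e1 : (1 + 𝐲) ^ 3 = PowerSeries.C ((1 + Polynomial.X) ^ 3) := by rw [y_eq]; simp
  have e2 : kernelSeries * H = PowerSeries.C (Polynomial.C Polynomial.X * Polynomial.X) * H
      - 𝐭 * (PowerSeries.C ((1 + Polynomial.X) * (1 + (Polynomial.C Polynomial.X) ^ 2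
        * Polynomial.X)) * H) := by
    simp only [kernelSeries, x_eq, y_eq, map_mul, map_add, map_pow, map_one]
    ring
  rw [e1, e2] at h
  have key : ∀ n, PowerSeries.coeff n A = 0 ∧ PowerSeries.coeff n B = 0 ∧
      PowerSeries.coeff n H = 0 := by
    intro n
    induction n with
    | zero =>
      apply invariant_step _ _ _ (hA' 0)
      have := congrArg (PowerSeries.coeff 0) h
      simpa only [map_sub, embX, embY, PowerSeries.coeff_C_mul, PowerSeries.coeff_map,
        Polynomial.coe_mapRingHom, PowerSeries.coeff_zero_X_mul, sub_zero] using this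
    | succ n ih =>
      apply invariant_step _ _ _ (hA' _)
      have := congrArg (PowerSeries.coeff (n + 1)) h
      simpa only [map_sub, embX, embY, PowerSeries.coeff_C_mul, PowerSeries.coeff_map,
        Polynomial.coe_mapRingHom, PowerSeries.coeff_succ_X_mul, ih.2.2, mul_zero,
        sub_zero] using this
  exact ⟨PowerSeries.ext fun n => by simpa using (key n).1,
    PowerSeries.ext fun n => by simpa using (key n).2.1⟩

/-! ### The two invariants and the cubic equations -/

/-- The generating function `Q(x, y)`. -/
def walkSeries : PowerSeries (Polynomial (Polynomial ℚ)) := PowerSeries.mk walkPoly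

/-- The generating function `Q(x, 0)` of walks ending on the horizontal axis. -/
def walkSeriesX : PowerSeries (Polynomial ℚ) := PowerSeries.mk fun n => (walkPoly n).coeff 0

/-- The generating function `Q(0, y)` of walks ending on the vertical axis. -/
def walkSeriesY : PowerSeries (Polynomial ℚ) :=
  PowerSeries.mk fun n => (walkPoly n).map (Polynomial.evalRingHom 0)

/-- The generating function `Q(0, 0)` of excursions. -/
def excursionSeries : PowerSeries ℚ := PowerSeries.mk fun n => (g n 0 0 : ℚ)

lemma evalSeries_walkSeriesX : evalSeries 0 walkSeriesX = excursionSeries := by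
  ext n
  have := coeff_walkPoly n 0 0
  simpa [evalSeries, walkSeriesX, excursionSeries, ← Polynomial.coeff_zero_eq_eval_zero] using this

lemma evalSeries_walkSeriesY : evalSeries 0 walkSeriesY = excursionSeries := by
  ext n
  have := coeff_walkPoly n 0 0
  simpa [evalSeries, walkSeriesY, excursionSeries, ← Polynomial.coeff_zero_eq_eval_zero] using this

lemma functional_equation :
    kernelSeries * walkSeries = 𝐱 * 𝐲 - 𝐭 * embX walkSeriesX - 𝐭 * (1 + 𝐲) * embY walkSeriesY
      + 𝐭 * embX (embT excursionSeries) := by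
  have e2 : kernelSeries * walkSeries
      = PowerSeries.C (Polynomial.C Polynomial.X * Polynomial.X) * walkSeries
      - 𝐭 * (PowerSeries.C ((1 + Polynomial.X) * (1 + (Polynomial.C Polynomial.X) ^ 2
        * Polynomial.X)) * walkSeries) := by
    simp only [kernelSeries, x_eq, y_eq, map_mul, map_add, map_pow, map_one]
    ring
  have e3 : 𝐱 * 𝐲 - 𝐭 * embX walkSeriesX - 𝐭 * (1 + 𝐲) * embY walkSeriesY
      + 𝐭 * embX (embT excursionSeries) =
      PowerSeries.C (Polynomial.C Polynomial.X * Polynomial.X) - 𝐭 * embX walkSeriesX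
      - 𝐭 * (PowerSeries.C (1 + Polynomial.X) * embY walkSeriesY)
      + 𝐭 * embX (embT excursionSeries) := by
    simp only [x_eq, y_eq, map_mul, map_add, map_one]
    ring
  rw [e2, e3]
  obtain ⟨u, hu⟩ : ∃ u : Polynomial (Polynomial ℚ), u = 1 + Polynomial.X := ⟨_, rfl⟩
  rw [← hu]
  ext n : 1
  rcases n with _ | n
  · simp only [map_sub, map_add, PowerSeries.coeff_C_mul, PowerSeries.coeff_zero_X_mul,
      PowerSeries.coeff_zero_C, walkSeries, PowerSeries.coeff_mk, walkPoly_zero]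
    ring
  · simp only [map_sub, map_add, PowerSeries.coeff_C_mul, PowerSeries.coeff_succ_X_mul,
      PowerSeries.coeff_succ_C, walkSeries, PowerSeries.coeff_mk, embX, embY, embT,
      PowerSeries.coeff_map, walkSeriesX, walkSeriesY, excursionSeries, Polynomial.coe_mapRingHom,
      walkPoly_succ, ← hu]
    ring

/-- The kernel divides the difference of the cubic in `I₀, I₁` and the cubic in `J₀, J₁`, up to
monomial factors. Here `q`, `P`, `S` and `q₀` stand for `Q(x, y)`, `Q(x, 0)`, `Q(0, y)` and `Q(0, 0)`;
the `qᵢ` are the first coefficients of `Q(x, 0)` in `x`. The factor multiplying `(1 + y)³` is the cubic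
in `I₀, I₁`, with the constants `κ, η` and `γ` already chosen so that its polar part in `x` cancels and
a factor `x` comes out. -/
lemma invariant_identity {R : Type*} [CommRing R] (x y t q P S q₀ q₁ q₂ P₁ P₂ P₃ S₁ : R)
    (hP : P = q₀ + x * P₁) (hP₁ : P₁ = q₁ + x * P₂) (hP₂ : P₂ = q₂ + x * P₃)
    (hS : S = q₀ + y * S₁)
    (h : (x * y - t * (1 + y) * (1 + x ^ 2 * y)) * q
      = x * y - t * P - t * (1 + y) * S + t * q₀) :
    ∃ H, x ^ 3 * y * ((1 + y) ^ 3 *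
        (t ^ 2 * x * (2 * t ^ 2 * P₃ + t ^ 3 * P₁ ^ 2 - t * P₂ - t
          + t * P * (2 * t ^ 2 * P₂ + t ^ 3 * x * P₁ ^ 2 - t * P₁ + 1 - t * x)))
        - ((1 - t ^ 2 * (1 + y) * (q₀ + (1 + y) * S₁)) *
          (y * (y * (1 - t ^ 2 * (1 + y) * (q₀ + (1 + y) * S₁))) ^ 2
            - (1 + 2 * t ^ 2 * q₀) * (1 + y) * y *
              (y * (1 - t ^ 2 * (1 + y) * (q₀ + (1 + y) * S₁)))
            + (t ^ 2 * (1 + y) ^ 4 + y ^ 2 - 4 * t ^ 2 * y * (1 + y) ^ 2)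
            - (2 * t ^ 2 * q₁ - 2 * t - t * q₀ - t ^ 3 * q₀ ^ 2) * t * y * (1 + y) ^ 2)
          - (1 - t * q₁ + 2 * t ^ 2 * q₂) * t ^ 2 * (1 + y) ^ 3))
      = (x * y - t * (1 + y) * (1 + x ^ 2 * y)) * H := by
  set γ := 1 + 2 * t ^ 2 * q₀ with hγ
  set κ := 2 * t ^ 2 * q₁ - 2 * t - t * q₀ - t ^ 3 * q₀ ^ 2 with hκ
  set η := 1 - t * q₁ + 2 * t ^ 2 * q₂ with hη
  set a := 1 + t * x * P with ha
  set β := 1 - t ^ 2 * (1 + y) * (q₀ + (1 + y) * S₁) with hβ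
  set i₀ := x ^ 3 + x - t * (x ^ 2 + 1) ^ 2 with hi
  set j₀ := t ^ 2 * (1 + y) ^ 4 + y ^ 2 - 4 * t ^ 2 * y * (1 + y) ^ 2 with hj
  set N := x * y - t * (1 + y) * (1 + x ^ 2 * y) with hN
  -- `I₁ - J₁` is a multiple of the kernel, by the functional equation
  have h1 : t * (1 + y) * a - x * (y * β) = -(N * (t * x * (1 + y) * q + 1)) := by
    have e : N * (t * x * (1 + y) * q + 1) = t * x * (1 + y) * (N * q) + N := by ring
    rw [e, h, ha, hβ, hN, hS]
    ring
  -- `I₀ - J₀` is a multiple of the kernel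
  have h0 : t * y * (1 + y) ^ 2 * i₀ - x ^ 2 * j₀
      = N * (-(x * y) + t * (1 + y) * (x ^ 2 + y)) := by
    rw [hi, hj, hN]
    ring
  -- the polar part in `x` of the cubic in `I₀, I₁` cancels
  have hΦ : x ^ 4 * (2 * t ^ 2 * P₃ + t ^ 3 * P₁ ^ 2 - t * P₂ - t
          + t * P * (2 * t ^ 2 * P₂ + t ^ 3 * x * P₁ ^ 2 - t * P₁ + 1 - t * x))
      = t * a ^ 3 - γ * x * a ^ 2 + (i₀ - κ * x ^ 2) * a - η * x ^ 3 := by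
    rw [ha, hi, hγ, hκ, hη, hP, hP₁, hP₂]
    ring
  refine ⟨-(t * x * (1 + y) * q + 1) * (y * ((t * (1 + y) * a) ^ 2
    + t * (1 + y) * a * (x * (y * β)) + (x * (y * β)) ^ 2)
    - γ * x * y * (1 + y) * (t * (1 + y) * a + x * (y * β))
    + t * y * (1 + y) ^ 2 * (i₀ - κ * x ^ 2))
    + x * (y * β) * (-(x * y) + t * (1 + y) * (x ^ 2 + y)), ?_⟩
  clear_value γ κ η a β i₀ j₀ N
  linear_combination (t ^ 2 * y * (1 + y) ^ 3) * hΦ + (y * ((t * (1 + y) * a) ^ 2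
    + t * (1 + y) * a * (x * (y * β)) + (x * (y * β)) ^ 2)
    - γ * x * y * (1 + y) * (t * (1 + y) * a + x * (y * β))
    + t * y * (1 + y) ^ 2 * (i₀ - κ * x ^ 2)) * h1 + x * (y * β) * h0

/-- The cubic equations for `a = x I₁ = 1 + t x Q(x, 0)` and `b = t (1 + y) J₁`, with `y` dividing
`b`. -/
lemma cubic_equations : ∃ (κ η : PowerSeries ℚ) (S₁ b : PowerSeries (Polynomial ℚ)),
    b = 𝐯 * (1 - 𝐭 ^ 2 * (1 + 𝐯) * (embT excursionSeries + (1 + 𝐯) * S₁)) ∧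
    𝐭 * (1 + 𝐭 * 𝐯 * walkSeriesX) ^ 3
      - (1 + 2 * 𝐭 ^ 2 * embT excursionSeries) * 𝐯 * (1 + 𝐭 * 𝐯 * walkSeriesX) ^ 2
      + (𝐯 ^ 3 + 𝐯 - 𝐭 * (𝐯 ^ 2 + 1) ^ 2 - embT κ * 𝐯 ^ 2) * (1 + 𝐭 * 𝐯 * walkSeriesX)
      - embT η * 𝐯 ^ 3 = 0 ∧
    𝐯 * b ^ 3 - (1 + 2 * 𝐭 ^ 2 * embT excursionSeries) * (1 + 𝐯) * 𝐯 * b ^ 2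
      + (𝐭 ^ 2 * (1 + 𝐯) ^ 4 + 𝐯 ^ 2 - (4 * 𝐭 + embT κ) * 𝐭 * 𝐯 * (1 + 𝐯) ^ 2) * b
      - embT η * 𝐭 ^ 2 * 𝐯 * (1 + 𝐯) ^ 3 = 0 := by
  obtain ⟨P₁, hP⟩ := exists_eq_eval_add 0 walkSeriesX
  obtain ⟨P₂, hP₁⟩ := exists_eq_eval_add 0 P₁
  obtain ⟨P₃, hP₂⟩ := exists_eq_eval_add 0 P₂
  obtain ⟨S₁, hS⟩ := exists_eq_eval_add 0 walkSeriesY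
  rw [evalSeries_walkSeriesX] at hP
  rw [evalSeries_walkSeriesY] at hS
  simp only [map_zero, sub_zero] at hP hP₁ hP₂ hS
  set q₁ := evalSeries 0 P₁
  set q₂ := evalSeries 0 P₂
  set q₀ := excursionSeries with hq₀
  set A : PowerSeries (Polynomial ℚ) := 𝐭 ^ 2 * 𝐯 * (2 * 𝐭 ^ 2 * P₃ + 𝐭 ^ 3 * P₁ ^ 2 - 𝐭 * P₂ - 𝐭
    + 𝐭 * walkSeriesX * (2 * 𝐭 ^ 2 * P₂ + 𝐭 ^ 3 * 𝐯 * P₁ ^ 2 - 𝐭 * P₁ + 1 - 𝐭 * 𝐯)) with hA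
  set b' : PowerSeries (Polynomial ℚ) :=
    1 - 𝐭 ^ 2 * (1 + 𝐯) * (embT q₀ + (1 + 𝐯) * S₁) with hb'
  set κ : PowerSeries ℚ := 2 * 𝐭 ^ 2 * q₁ - 2 * 𝐭 - 𝐭 * q₀ - 𝐭 ^ 3 * q₀ ^ 2 with hκ
  set η : PowerSeries ℚ := 1 - 𝐭 * q₁ + 2 * 𝐭 ^ 2 * q₂ with hη
  set B : PowerSeries (Polynomial ℚ) := b' * (𝐯 * (𝐯 * b') ^ 2
      - (1 + 2 * 𝐭 ^ 2 * embT q₀) * (1 + 𝐯) * 𝐯 * (𝐯 * b')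
      + (𝐭 ^ 2 * (1 + 𝐯) ^ 4 + 𝐯 ^ 2 - 4 * 𝐭 ^ 2 * 𝐯 * (1 + 𝐯) ^ 2)
      - embT κ * 𝐭 * 𝐯 * (1 + 𝐯) ^ 2)
      - embT η * 𝐭 ^ 2 * (1 + 𝐯) ^ 3 with hB
  have hAB : A = 0 ∧ B = 0 := by
    obtain ⟨H, hH⟩ := invariant_identity 𝐱 𝐲 𝐭 walkSeries (embX walkSeriesX) (embY walkSeriesY)
      (embX (embT q₀)) (embX (embT q₁)) (embX (embT q₂)) (embX P₁) (embX P₂) (embX P₃) (embY S₁)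
      (by rw [← map_mul, ← map_add, ← hP]) (by rw [← map_mul, ← map_add, ← hP₁])
      (by rw [← map_mul, ← map_add, ← hP₂])
      (by rw [embX_embT, ← map_mul, ← map_add, ← hS]) functional_equation
    rw [show 𝐱 * 𝐲 - 𝐭 * (1 + 𝐲) * (1 + 𝐱 ^ 2 * 𝐲) = kernelSeries from rfl,
      show 𝐱 ^ 3 * 𝐲 = 𝐱 * (𝐱 * (𝐱 * 𝐲)) by ring] at hH
    simp only [mul_assoc 𝐱] at hH
    obtain ⟨H, hH⟩ := exists_of_x_mul_eq _ _ hH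
    obtain ⟨H, hH⟩ := exists_of_x_mul_eq _ _ hH
    obtain ⟨H, hH⟩ := exists_of_x_mul_eq _ _ hH
    obtain ⟨H, hH⟩ := exists_of_y_mul_eq _ _ hH
    refine invariant_lemma A B H ?_ ?_
    · rw [hA]
      simp
    · rw [← hH, hA, hB, hκ, hη, hb']
      simp only [map_mul, map_add, map_sub, map_pow, map_one, map_ofNat, embX_t, embY_t, embT_t,
        embX_embT]
  refine ⟨κ, η, S₁, 𝐯 * b', rfl, ?_, ?_⟩
  · have ht : (𝐭 : PowerSeries (Polynomial ℚ)) ^ 2 ≠ 0 := pow_ne_zero _ PowerSeries.X_ne_zero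
    apply mul_left_cancel₀ ht
    have hκ' : embT κ = 2 * 𝐭 ^ 2 * embT q₁ - 2 * 𝐭 - 𝐭 * embT q₀ - 𝐭 ^ 3 * embT q₀ ^ 2 := by
      rw [hκ]; simp only [map_mul, map_sub, map_pow, map_ofNat, embT_t]
    have hη' : embT η = 1 - 𝐭 * embT q₁ + 2 * 𝐭 ^ 2 * embT q₂ := by
      rw [hη]; simp only [map_mul, map_add, map_sub, map_pow, map_one, map_ofNat, embT_t]
    have e : A * 𝐯 ^ 3 = 0 := by rw [hAB.1, zero_mul]
    rw [hA] at e
    rw [mul_zero, ← e, hκ', hη', hP, hP₁, hP₂]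
    ring
  · have e : B * 𝐯 = 0 := by rw [hAB.2, zero_mul]
    rw [hB] at e
    linear_combination e

/-! ### Double roots at `x = ±1` and `y = 1` -/

lemma constantCoeff_evalSeries (r : ℚ) (f : PowerSeries (Polynomial ℚ)) :
    PowerSeries.constantCoeff (evalSeries r f) = (PowerSeries.constantCoeff f).eval r := by
  rw [← PowerSeries.coeff_zero_eq_constantCoeff_apply,
    ← PowerSeries.coeff_zero_eq_constantCoeff_apply, evalSeries, PowerSeries.coeff_map]
  rfl

lemma constantCoeff_embT (f : PowerSeries ℚ) :
    PowerSeries.constantCoeff (embT f) = Polynomial.C (PowerSeries.constantCoeff f) := by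
  rw [← PowerSeries.coeff_zero_eq_constantCoeff_apply,
    ← PowerSeries.coeff_zero_eq_constantCoeff_apply, embT, PowerSeries.coeff_map]

lemma v_sub_ne_zero (r : ℚ) : 𝐯 - embT (PowerSeries.C r) ≠ 0 := by
  intro h
  have := congrArg PowerSeries.constantCoeff h
  rw [map_sub, constantCoeff_embT] at this
  simp only [PowerSeries.constantCoeff_C, map_zero] at this
  exact Polynomial.X_sub_C_ne_zero r this

lemma ne_zero_of_constantCoeff {f : PowerSeries ℚ} (h : PowerSeries.constantCoeff f ≠ 0) :
    f ≠ 0 := by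
  rintro rfl
  simp at h

/-- At `x = r = ±1` the derivative in `x` of `I₀` vanishes. Writing the cubic as `Φ(I₀(x), I₁(x))`, its
derivative at `x = r` is therefore `I₁'(r)` times the partial derivative of `Φ` in the second
argument, and the latter has to vanish because `I₁'(r) ≠ 0`. -/
lemma double_root_x (γ κ η : PowerSeries ℚ) (a : PowerSeries (Polynomial ℚ))
    (ha : PowerSeries.constantCoeff a = 1)
    (h : 𝐭 * a ^ 3 - embT γ * 𝐯 * a ^ 2
      + (𝐯 ^ 3 + 𝐯 - 𝐭 * (𝐯 ^ 2 + 1) ^ 2 - embT κ * 𝐯 ^ 2) * a - embT η * 𝐯 ^ 3 = 0)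
    (r : ℚ) (hr : r ^ 2 = 1) :
    𝐭 * evalSeries r a ^ 3 - γ * PowerSeries.C r * evalSeries r a ^ 2
      + (2 * PowerSeries.C r - 4 * 𝐭 - κ) * evalSeries r a - η * PowerSeries.C r = 0 ∧
    3 * 𝐭 * evalSeries r a ^ 2 - 2 * γ * PowerSeries.C r * evalSeries r a
      + (2 * PowerSeries.C r - 4 * 𝐭 - κ) = 0 := by
  obtain ⟨a₁, h₁⟩ := exists_eq_eval_add r a
  have ha₁ : PowerSeries.constantCoeff a₁ = 0 := by
    have := congrArg PowerSeries.constantCoeff h₁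
    rw [map_add, map_mul, map_sub, constantCoeff_embT, constantCoeff_embT,
      constantCoeff_evalSeries, ha] at this
    simp only [Polynomial.eval_one, map_one, PowerSeries.constantCoeff_C, left_eq_add] at this
    exact (mul_eq_zero.mp this).resolve_left (Polynomial.X_sub_C_ne_zero r)
  have hρ : (PowerSeries.C r : PowerSeries ℚ) ^ 2 = 1 := by rw [← map_pow, hr, map_one]
  have h0 := congrArg (evalSeries r) h
  simp only [map_mul, map_add, map_sub, map_pow, map_one, evalSeries_t, evalSeries_v,
    evalSeries_embT, map_zero] at h0
  have hR : (r : ℚ) ≠ 0 := by rintro rfl; norm_num at hr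
  set u := evalSeries r a with hu
  set ρ : PowerSeries ℚ := PowerSeries.C r with hρd
  have hF : 𝐭 * u ^ 3 - γ * ρ * u ^ 2 + (2 * ρ - 4 * 𝐭 - κ) * u - η * ρ = 0 := by
    linear_combination h0 + (-ρ * u + 𝐭 * u * (ρ ^ 2 + 3) + κ * u + η * ρ) * hρ
  refine ⟨hF, ?_⟩
  -- Taylor expansion of the cubic in `x - r`; the linear coefficient comes first
  have hE : (𝐯 - embT ρ) * (3 * 𝐭 * embT u ^ 2 * a₁ - embT γ * (embT u ^ 2 + 2 * embT ρ * embT u * a₁)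
      + ((embT ρ ^ 3 + embT ρ - 𝐭 * (embT ρ ^ 2 + 1) ^ 2 - embT κ * embT ρ ^ 2) * a₁
        + (3 * embT ρ ^ 2 + 1 - 4 * 𝐭 * embT ρ * (embT ρ ^ 2 + 1) - 2 * embT κ * embT ρ) * embT u)
      - 3 * embT η * embT ρ ^ 2
      + (𝐯 - embT ρ) * (𝐭 * (3 * embT u * a₁ ^ 2 + (𝐯 - embT ρ) * a₁ ^ 3)
        - embT γ * (2 * embT u * a₁ + embT ρ * a₁ ^ 2 + (𝐯 - embT ρ) * a₁ ^ 2)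
        + ((3 * embT ρ ^ 2 + 1 - 4 * 𝐭 * embT ρ * (embT ρ ^ 2 + 1) - 2 * embT κ * embT ρ) * a₁
          + (3 * embT ρ + (𝐯 - embT ρ) - 𝐭 * (6 * embT ρ ^ 2 + 4 * embT ρ * (𝐯 - embT ρ)
            + (𝐯 - embT ρ) ^ 2 + 2) - embT κ) * (embT u + (𝐯 - embT ρ) * a₁))
        - embT η * (3 * embT ρ + (𝐯 - embT ρ)))) = 0 := by
    have h0' := congrArg embT h0
    simp only [map_mul, map_add, map_sub, map_pow, map_one, embT_t, map_zero] at h0'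
    rw [h₁] at h
    linear_combination h - h0'
  have hE' := (mul_eq_zero.mp hE).resolve_left (v_sub_ne_zero r)
  have hE2 := congrArg (evalSeries r) hE'
  simp only [map_mul, map_add, map_sub, map_pow, map_one, map_ofNat, evalSeries_t, evalSeries_v,
    evalSeries_embT, map_zero, ← hρd, sub_self, zero_mul, add_zero] at hE2
  set w := evalSeries r a₁ with hw
  have hw0 : PowerSeries.constantCoeff w = 0 := by
    rw [hw, constantCoeff_evalSeries, ha₁, Polynomial.eval_zero]
  have hu0 : PowerSeries.constantCoeff u = 1 := by
    rw [hu, constantCoeff_evalSeries, ha, Polynomial.eval_one]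
  -- up to a sign and a unit, `w - ρ u` is the derivative of `I₁ = a / x` at `r`
  have hne : w - ρ * u ≠ 0 := ne_zero_of_constantCoeff (by
    rw [map_sub, map_mul, hw0, hu0, hρd, PowerSeries.constantCoeff_C]
    simpa using hR)
  refine mul_left_cancel₀ hne ?_
  rw [mul_zero]
  have hρ3 : ρ ^ 3 = ρ := by linear_combination ρ * hρ
  simp only [hρ3, hρ] at hE2
  linear_combination hE2 - 3 * ρ * hF + (4 * u - γ * u ^ 2 - 3 * η) * hρ

/-- The analogue of `double_root_x` for the invariants in `y`, at the critical point `y = 1` of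
`J₀`. -/
lemma double_root_y (γ κ η : PowerSeries ℚ) (b : PowerSeries (Polynomial ℚ))
    (hb : PowerSeries.constantCoeff b = Polynomial.X)
    (h : 𝐯 * b ^ 3 - embT γ * (1 + 𝐯) * 𝐯 * b ^ 2
      + (𝐭 ^ 2 * (1 + 𝐯) ^ 4 + 𝐯 ^ 2 - (4 * 𝐭 + embT κ) * 𝐭 * 𝐯 * (1 + 𝐯) ^ 2) * b
      - embT η * 𝐭 ^ 2 * 𝐯 * (1 + 𝐯) ^ 3 = 0) :
    evalSeries 1 b ^ 3 - 2 * γ * evalSeries 1 b ^ 2 + (1 - 4 * κ * 𝐭) * evalSeries 1 b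
      - 8 * η * 𝐭 ^ 2 = 0 ∧
    3 * evalSeries 1 b ^ 2 - 4 * γ * evalSeries 1 b + (1 - 4 * κ * 𝐭) = 0 := by
  obtain ⟨b₁, h₁⟩ := exists_eq_eval_add 1 b
  have hb₁ : PowerSeries.constantCoeff b₁ = 1 := by
    have := congrArg PowerSeries.constantCoeff h₁
    rw [map_add, map_mul, map_sub, constantCoeff_embT, constantCoeff_embT,
      constantCoeff_evalSeries, hb] at this
    simp only [Polynomial.eval_X, map_one, PowerSeries.constantCoeff_C] at this
    have hX : (Polynomial.X - 1 : Polynomial ℚ) ≠ 0 := by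
      simpa using Polynomial.X_sub_C_ne_zero (1 : ℚ)
    apply mul_left_cancel₀ hX
    linear_combination -this
  have h0 := congrArg (evalSeries 1) h
  simp only [map_mul, map_add, map_sub, map_pow, map_one, map_ofNat, evalSeries_t, evalSeries_v,
    evalSeries_embT, map_zero] at h0
  set u := evalSeries 1 b with hu
  have hF : u ^ 3 - 2 * γ * u ^ 2 + (1 - 4 * κ * 𝐭) * u - 8 * η * 𝐭 ^ 2 = 0 := by
    linear_combination h0
  refine ⟨hF, ?_⟩
  obtain ⟨d, hd⟩ : ∃ d : PowerSeries (Polynomial ℚ), d = 𝐯 - 1 := ⟨_, rfl⟩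
  -- Taylor expansion of the cubic in `d = y - 1`, whose constant term is `hF`
  have hE : d * (embT u ^ 3 + 3 * embT u ^ 2 * b₁
      - embT γ * (3 * embT u ^ 2 + 4 * embT u * b₁)
      + ((1 - 4 * embT κ * 𝐭) * b₁ + (32 * 𝐭 ^ 2 + 2 - 8 * (4 * 𝐭 + embT κ) * 𝐭) * embT u)
      - 20 * embT η * 𝐭 ^ 2
      + d * ((3 * embT u * b₁ ^ 2 + d * b₁ ^ 3) + (3 * embT u ^ 2 * b₁ + 3 * embT u * d * b₁ ^ 2
            + d ^ 2 * b₁ ^ 3)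
        - embT γ * ((embT u + d * b₁) ^ 2 + 3 * (2 * embT u * b₁ + d * b₁ ^ 2) + 2 * b₁ ^ 2)
        + ((32 * 𝐭 ^ 2 + 2 - 8 * (4 * 𝐭 + embT κ) * 𝐭) * b₁
          + (𝐭 ^ 2 * (24 + 8 * d + d ^ 2) + 1 - (4 * 𝐭 + embT κ) * 𝐭 * (5 + d))
            * (embT u + d * b₁))
        - embT η * 𝐭 ^ 2 * (18 + 7 * d + d ^ 2))) = 0 := by
    have h0' := congrArg embT hF
    simp only [map_mul, map_add, map_sub, map_pow, map_one, embT_t, map_zero, map_ofNat] at h0'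
    have hv : 𝐯 = 1 + d := by rw [hd]; ring
    rw [map_one, map_one, ← hd] at h₁
    rw [h₁, hv] at h
    linear_combination h - h0'
  have hd0 : d ≠ 0 := by
    have := v_sub_ne_zero 1
    rwa [map_one, map_one, ← hd] at this
  have hE' := (mul_eq_zero.mp hE).resolve_left hd0
  have hE2 := congrArg (evalSeries 1) hE'
  have hd1 : evalSeries 1 d = 0 := by rw [hd]; simp
  simp only [map_mul, map_add, map_sub, map_pow, map_one, map_ofNat, evalSeries_t,
    evalSeries_embT, map_zero, hd1, zero_mul, add_zero] at hE2
  set w := evalSeries 1 b₁ with hw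
  have hw0 : PowerSeries.constantCoeff w = 1 := by
    rw [hw, constantCoeff_evalSeries, hb₁, Polynomial.eval_one]
  have hu0 : PowerSeries.constantCoeff u = 1 := by
    rw [hu, constantCoeff_evalSeries, hb, Polynomial.eval_X]
  -- up to a unit, `2 w - u` is the derivative of `t J₁ = b / (1 + y)` at `1`
  have hne : 2 * w - u ≠ 0 := ne_zero_of_constantCoeff (by
    rw [map_sub, map_mul, hw0, hu0, map_ofNat]
    norm_num)
  refine mul_left_cancel₀ hne ?_
  rw [mul_zero]
  linear_combination 2 * hE2 - 5 * hF

/-! ### The algebraic system -/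

/-- Elimination of `κ` and `η` from the three double root conditions; `e` is half the sum of the two
roots `2tu` and `-2ts`. -/
lemma algebraic_system (γ κ η u s v : PowerSeries ℚ)
    (hu : PowerSeries.constantCoeff u = 1) (hs : PowerSeries.constantCoeff s = 1)
    (hv : PowerSeries.constantCoeff v = 1)
    (F₁ : 𝐭 * u ^ 3 - γ * u ^ 2 + (2 - 4 * 𝐭 - κ) * u - η = 0)
    (F₁' : 3 * 𝐭 * u ^ 2 - 2 * γ * u + (2 - 4 * 𝐭 - κ) = 0)
    (F₂ : 𝐭 * s ^ 3 + γ * s ^ 2 + (-2 - 4 * 𝐭 - κ) * s + η = 0)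
    (F₂' : 3 * 𝐭 * s ^ 2 + 2 * γ * s + (-2 - 4 * 𝐭 - κ) = 0)
    (G : v ^ 3 - 2 * γ * v ^ 2 + (1 - 4 * κ * 𝐭) * v - 8 * η * 𝐭 ^ 2 = 0)
    (G' : 3 * v ^ 2 - 4 * γ * v + (1 - 4 * κ * 𝐭) = 0) :
    ∃ e : PowerSeries ℚ, PowerSeries.constantCoeff e = 0 ∧ γ = v + 2 * e ∧
      16 * 𝐭 ^ 2 = e * (e + 2 * v) ^ 3 ∧ 1 + 16 * 𝐭 ^ 2 = v ^ 2 + 10 * v * e - 2 * e ^ 2 := by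
  have ht : (𝐭 : PowerSeries ℚ) ≠ 0 := PowerSeries.X_ne_zero
  have h2 : (2 : PowerSeries ℚ) ≠ 0 := ne_zero_of_constantCoeff (by rw [map_ofNat]; norm_num)
  have hU : v - 2 * 𝐭 * u ≠ 0 := ne_zero_of_constantCoeff (by simp [hv])
  have hW : v + 2 * 𝐭 * s ≠ 0 := ne_zero_of_constantCoeff (by simp [hv])
  have hUW : 2 * 𝐭 * (u + s) ≠ 0 := by
    refine mul_ne_zero (mul_ne_zero h2 ht) (ne_zero_of_constantCoeff ?_)
    rw [map_add, hu, hs]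
    norm_num
  -- `v`, `2tu` and `-2ts` are the roots of `z ^ 3 - γ z ^ 2 + 4 η t ^ 2`
  have A₁ : v ^ 2 + v * (2 * 𝐭 * u) + (2 * 𝐭 * u) ^ 2 - γ * (v + 2 * 𝐭 * u) = 0 := by
    refine mul_left_cancel₀ hU (mul_left_cancel₀ h2 ?_)
    linear_combination v * G' - G - 8 * 𝐭 ^ 2 * (u * F₁' - F₁)
  have A₂ : v ^ 2 - v * (2 * 𝐭 * s) + (2 * 𝐭 * s) ^ 2 - γ * (v - 2 * 𝐭 * s) = 0 := by
    refine mul_left_cancel₀ hW (mul_left_cancel₀ h2 ?_)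
    linear_combination v * G' - G + 8 * 𝐭 ^ 2 * (s * F₂' - F₂)
  have hγ : γ = v + 2 * (𝐭 * (u - s)) := by
    refine mul_left_cancel₀ hUW ?_
    linear_combination A₂ - A₁
  obtain ⟨e, he⟩ : ∃ e, e = 𝐭 * (u - s) := ⟨_, rfl⟩
  rw [← he] at hγ
  have hP : 2 * v * e = 4 * 𝐭 ^ 2 * u * s := by
    rw [hγ] at A₁
    linear_combination -A₁ - 4 * 𝐭 * u * he
  have hD : 𝐭 * (u + s) * (e + 2 * v) = 4 * 𝐭 := by
    rw [hγ] at F₁' F₂'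
    linear_combination -𝐭 * (F₁' - F₂') - 3 * 𝐭 * (u + s) * he
  have hD2 : (𝐭 * (u + s)) ^ 2 = e * (e + 2 * v) := by
    rw [he] at hP ⊢
    linear_combination -hP
  refine ⟨e, by simp [he], hγ, ?_, ?_⟩
  · linear_combination -(𝐭 * (u + s) * (e + 2 * v) + 4 * 𝐭) * hD + (e + 2 * v) ^ 2 * hD2
  · rw [hγ] at F₁' F₂' G'
    linear_combination G' - 2 * 𝐭 * (F₁' + F₂') - 3 * hP
      + (4 * v + 2 * e - 6 * 𝐭 * (u - s)) * he

/-! ### Rational uniformization and differential equation -/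

/-- Rational parametrization of the curve of `algebraic_system`. With `z = 1 - 4 e / v`, the two
equations give a quadratic equation for `v²` over `ℚ(z)` whose discriminant is `z³` up to a square,
so that `r = √z` is a rational parameter. -/
lemma exists_uniformization (e v : PowerSeries ℚ) (he : PowerSeries.constantCoeff e = 0)
    (hv : PowerSeries.constantCoeff v = 1) (h₁ : 16 * 𝐭 ^ 2 = e * (e + 2 * v) ^ 3)
    (h₂ : 1 + 16 * 𝐭 ^ 2 = v ^ 2 + 10 * v * e - 2 * e ^ 2) :
    ∃ r : PowerSeries ℚ, PowerSeries.constantCoeff r = 1 ∧ 4 * e = v * (1 - r ^ 2) ∧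
      v ^ 2 * ((1 + r) * (3 - r) ^ 3) = 16 ∧
      16 * 𝐭 ^ 2 * ((1 + r) * (3 - r) ^ 3) = (1 - r) * (3 + r) ^ 3 := by
  have hN : ∀ n : ℕ, n ≠ 0 → (n : PowerSeries ℚ) ≠ 0 := fun n hn =>
    ne_zero_of_constantCoeff (by rw [map_natCast]; exact_mod_cast hn)
  have hvv : v * v⁻¹ = 1 := PowerSeries.mul_inv_cancel _ (by rw [hv]; exact one_ne_zero)
  obtain ⟨z, hz⟩ : ∃ z, z = (v - 4 * e) * v⁻¹ := ⟨_, rfl⟩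
  have hze : 4 * e = v * (1 - z) := by
    rw [hz]
    linear_combination (v - 4 * e) * hvv
  have hz1 : PowerSeries.constantCoeff z = 1 := by
    rw [hz]
    simp [hv, he]
  have hzz : z * z⁻¹ = 1 := PowerSeries.mul_inv_cancel _ (by rw [hz1]; exact one_ne_zero)
  have e₁ : 4096 * 𝐭 ^ 2 = v ^ 4 * ((1 - z) * (9 - z) ^ 3) := by
    have : 4096 * 𝐭 ^ 2 = (4 * e) * (4 * e + 8 * v) ^ 3 := by linear_combination 256 * h₁
    rw [this, hze]
    ring
  have e₂ : 8 * (1 + 16 * 𝐭 ^ 2) = v ^ 2 * (27 - 18 * z - z ^ 2) := by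
    have : 8 * (1 + 16 * 𝐭 ^ 2) = 8 * v ^ 2 + 20 * v * (4 * e) - (4 * e) ^ 2 := by
      linear_combination 8 * h₂
    rw [this, hze]
    ring
  -- a square root of `z ^ 3`
  obtain ⟨c, hc⟩ : ∃ c : PowerSeries ℚ, 128 * c
      = 16 * (27 - 18 * z - z ^ 2) - v ^ 2 * (1 - z) * (9 - z) ^ 3 := by
    refine ⟨PowerSeries.C (1 / 128) *
      (16 * (27 - 18 * z - z ^ 2) - v ^ 2 * (1 - z) * (9 - z) ^ 3), ?_⟩
    have : (128 : PowerSeries ℚ) * PowerSeries.C (1 / 128) = 1 := by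
      rw [← map_ofNat (PowerSeries.C (R := ℚ)) 128, ← map_mul]
      norm_num
    rw [← mul_assoc, this, one_mul]
  have hc2 : c ^ 2 = z ^ 3 := by
    refine mul_left_cancel₀ (hN (128 ^ 2) (by norm_num)) ?_
    push_cast
    linear_combination (128 * c + 16 * (27 - 18 * z - z ^ 2) - v ^ 2 * (1 - z) * (9 - z) ^ 3) * hc
      + (1 - z) * (9 - z) ^ 3 * (32 * e₂ - e₁)
  have hc1 : PowerSeries.constantCoeff c = 1 := by
    have := congrArg PowerSeries.constantCoeff hc
    simp only [map_mul, map_sub, map_pow, map_one, map_ofNat, hz1] at this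
    linarith
  obtain ⟨r, hr⟩ : ∃ r, r = c * z⁻¹ := ⟨_, rfl⟩
  have hrz : r * z = c := by
    rw [hr]
    linear_combination c * hzz
  have hz0 : z ≠ 0 := ne_zero_of_constantCoeff (by rw [hz1]; exact one_ne_zero)
  have hr2 : z = r ^ 2 := by
    refine mul_left_cancel₀ (pow_ne_zero 2 hz0) ?_
    linear_combination -hc2 - (r * z + c) * hrz
  have hr1 : PowerSeries.constantCoeff r = 1 := by
    rw [hr]
    simp [hc1, hz1]
  subst hr2
  have hr0 : 1 - r ≠ 0 := by
    intro h
    have he0 : 4 * e = 0 := by rw [hze]; linear_combination v * (1 + r) * h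
    have : (4096 : PowerSeries ℚ) * 𝐭 ^ 2 = 0 := by
      linear_combination 256 * h₁ + 64 * (e + 2 * v) ^ 3 * he0
    have h4 := hN 4096 (by norm_num)
    push_cast at h4
    exact mul_ne_zero h4 (pow_ne_zero 2 PowerSeries.X_ne_zero) this
  have hr3 : 3 + r ≠ 0 := ne_zero_of_constantCoeff (by
    rw [map_add, hr1, map_ofNat]
    norm_num)
  have e₃ : v ^ 2 * ((1 + r) * (3 - r) ^ 3) = 16 := by
    refine mul_left_cancel₀ (mul_ne_zero hr0 (pow_ne_zero 3 hr3)) ?_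
    linear_combination hc + 128 * hrz
  refine ⟨r, hr1, hze, e₃, ?_⟩
  refine mul_left_cancel₀ (hN 256 (by norm_num)) ?_
  push_cast
  linear_combination (1 + r) * (3 - r) ^ 3 * e₁
    + (1 - r) * (3 + r) ^ 3 * (v ^ 2 * ((1 + r) * (3 - r) ^ 3) + 16) * e₃

/-- The Euler operator `t d/dt`. -/
def euler : Derivation ℚ (PowerSeries ℚ) (PowerSeries ℚ) :=
  (𝐭 : PowerSeries ℚ) • PowerSeries.derivative ℚ

lemma euler_t : euler 𝐭 = 𝐭 := by
  simp [euler, PowerSeries.derivative_X]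

lemma coeff_euler (f : PowerSeries ℚ) (n : ℕ) :
    PowerSeries.coeff n (euler f) = n * PowerSeries.coeff n f := by
  rw [euler, Derivation.smul_apply, smul_eq_mul]
  cases n with
  | zero => simp
  | succ n =>
    rw [PowerSeries.coeff_succ_X_mul, PowerSeries.coeff_derivative]
    push_cast
    ring

lemma euler_ofNat (n : ℕ) [n.AtLeastTwo] : euler (ofNat(n) : PowerSeries ℚ) = 0 :=
  euler.map_natCast n

/-- The differential equation for `D = 1 + 2 t² Q(0, 0)`, obtained by expressing `θ r`, `θ v`, `θ D` and
`θ² D` through `r` and `v`, where `θ = t d/dt`. -/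
lemma euler_equation (r v D e : PowerSeries ℚ) (hr : PowerSeries.constantCoeff r = 1)
    (hv : PowerSeries.constantCoeff v = 1) (hD : D = v + 2 * e) (he : 4 * e = v * (1 - r ^ 2))
    (h₁ : v ^ 2 * ((1 + r) * (3 - r) ^ 3) = 16)
    (h₂ : 16 * 𝐭 ^ 2 * ((1 + r) * (3 - r) ^ 3) = (1 - r) * (3 + r) ^ 3) :
    3 * euler (euler D) - 2 * euler D
      = 16 * 𝐭 ^ 2 * (3 * euler (euler D) - 4 * euler D + D) := by
  have h2 : (2 : PowerSeries ℚ) ≠ 0 := ne_zero_of_constantCoeff (by rw [map_ofNat]; norm_num)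
  have hr0 : r ≠ 0 := ne_zero_of_constantCoeff (by rw [hr]; exact one_ne_zero)
  have hv0 : v ≠ 0 := ne_zero_of_constantCoeff (by rw [hv]; exact one_ne_zero)
  have h3r : 3 - r ≠ 0 := ne_zero_of_constantCoeff (by
    rw [map_sub, hr, map_ofNat]
    norm_num)
  have h3r' : 3 + r ≠ 0 := ne_zero_of_constantCoeff (by
    rw [map_add, hr, map_ofNat]
    norm_num)
  have h1r : 1 + r ≠ 0 := ne_zero_of_constantCoeff (by
    rw [map_add, hr, map_one]
    norm_num)
  have d₂ := congrArg euler h₂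
  have d₁ := congrArg euler h₁
  simp only [Derivation.leibniz, Derivation.leibniz_pow, map_add, map_sub, euler_ofNat,
    Derivation.map_one_eq_zero, euler_t, smul_eq_mul, nsmul_eq_mul] at d₁ d₂
  push_cast at d₁ d₂
  have hr' : 8 * r ^ 2 * euler r = -((1 - r ^ 2) * (9 - r ^ 2)) := by
    refine mul_left_cancel₀ (mul_ne_zero h2 (pow_ne_zero 2 (mul_ne_zero h3r h3r'))) ?_
    linear_combination (1 + r) * (3 - r) ^ 3 * d₂
      - (2 * ((1 + r) * (3 - r) ^ 3) - 4 * r * (3 - r) ^ 2 * euler r) * h₂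
  have hv' : 4 * r * euler v = -(v * ((1 - r) * (3 + r))) := by
    refine mul_left_cancel₀ (mul_ne_zero (mul_ne_zero hv0 (pow_ne_zero 2 h3r))
      (mul_ne_zero h1r h3r)) ?_
    linear_combination 2 * r * d₁ + v ^ 2 * (3 - r) ^ 2 * hr'
  have hDv : 2 * D = v * (3 - r ^ 2) := by
    rw [hD]
    linear_combination he
  have hD' : 4 * euler D = v * ((1 - r) * (3 + r)) := by
    have d := congrArg euler hDv
    simp only [Derivation.leibniz, Derivation.leibniz_pow, map_sub, euler_ofNat, smul_eq_mul,
      nsmul_eq_mul] at d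
    push_cast at d
    refine mul_left_cancel₀ (mul_ne_zero h2 hr0) ?_
    linear_combination 4 * r * d + (3 - r ^ 2) * hv' - v * hr'
  have hD'' : 16 * r ^ 2 * euler (euler D)
      = v * ((1 - r) * (3 + r) * (3 * r ^ 2 + 2 * r + 3)) := by
    have d := congrArg euler hD'
    simp only [Derivation.leibniz, map_add, map_sub, euler_ofNat, Derivation.map_one_eq_zero,
      smul_eq_mul] at d
    linear_combination 4 * r ^ 2 * d + r * (1 - r) * (3 + r) * hv' - v * (1 + r) * hr'
  have h16 : 16 * r ^ 2 ≠ 0 :=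
    ne_zero_of_constantCoeff (by rw [map_mul, map_pow, hr, map_ofNat]; norm_num)
  refine mul_left_cancel₀ h16 ?_
  linear_combination 3 * (1 - 16 * 𝐭 ^ 2) * hD'' - (8 - 256 * 𝐭 ^ 2) * r ^ 2 * hD'
    - 8 * r ^ 2 * 16 * 𝐭 ^ 2 * hDv - v * h₂

/-- The second-order linear differential equation satisfied by `1 + 2 t² Q(0, 0)`. -/
lemma excursion_equation : 3 * euler (euler (1 + 2 * 𝐭 ^ 2 * excursionSeries))
      - 2 * euler (1 + 2 * 𝐭 ^ 2 * excursionSeries)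
    = 16 * 𝐭 ^ 2 * (3 * euler (euler (1 + 2 * 𝐭 ^ 2 * excursionSeries))
      - 4 * euler (1 + 2 * 𝐭 ^ 2 * excursionSeries) + (1 + 2 * 𝐭 ^ 2 * excursionSeries)) := by
  obtain ⟨κ, η, S₁, b, hb, hx, hy⟩ := cubic_equations
  obtain ⟨γ, hγ⟩ : ∃ γ, γ = 1 + 2 * 𝐭 ^ 2 * excursionSeries := ⟨_, rfl⟩
  have hγ' : 1 + 2 * 𝐭 ^ 2 * embT excursionSeries = embT γ := by
    rw [hγ]
    simp only [map_add, map_mul, map_pow, map_one, map_ofNat, embT_t]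
  rw [hγ'] at hx hy
  rw [← hγ]
  have ha0 : PowerSeries.constantCoeff (1 + 𝐭 * 𝐯 * walkSeriesX) = 1 := by simp
  have hb0 : PowerSeries.constantCoeff b = Polynomial.X := by rw [hb]; simp
  obtain ⟨F₁, F₁'⟩ := double_root_x γ κ η _ ha0 hx 1 (by norm_num)
  obtain ⟨F₂, F₂'⟩ := double_root_x γ κ η _ ha0 hx (-1) (by norm_num)
  obtain ⟨G, G'⟩ := double_root_y γ κ η b hb0 hy
  rw [map_one] at F₁ F₁'
  rw [map_neg, map_one] at F₂ F₂'
  obtain ⟨e, he, hD, h₁, h₂⟩ := algebraic_system γ κ η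
    (evalSeries 1 (1 + 𝐭 * 𝐯 * walkSeriesX)) (evalSeries (-1) (1 + 𝐭 * 𝐯 * walkSeriesX))
    (evalSeries 1 b)
    (by rw [constantCoeff_evalSeries, ha0, Polynomial.eval_one])
    (by rw [constantCoeff_evalSeries, ha0, Polynomial.eval_one])
    (by rw [constantCoeff_evalSeries, hb0, Polynomial.eval_X])
    (by linear_combination F₁) (by linear_combination F₁') (by linear_combination F₂)
    (by linear_combination F₂') G G'
  have hv : PowerSeries.constantCoeff (evalSeries 1 b) = 1 := by
    rw [constantCoeff_evalSeries, hb0, Polynomial.eval_X]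
  obtain ⟨r, hr, her, h₃, h₄⟩ := exists_uniformization e _ he hv h₁ h₂
  exact euler_equation r _ γ e hr hv hD her h₃ h₄

/-- The Gessel excursion numbers satisfy the first-order recurrence
`(n+2)(3n+5) g(2n+2;0,0) = 4(6n+5)(2n+1) g(2n;0,0)`, with `g(0;0,0) = 1`. -/
theorem gessel_excursions_recurrence :
    g 0 0 0 = 1 ∧
    ∀ n : ℕ, (n + 2) * (3 * n + 5) * g (2 * n + 2) 0 0
      = 4 * (6 * n + 5) * (2 * n + 1) * g (2 * n) 0 0 := by
  refine ⟨by simp [g_zero], fun n => ?_⟩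
  have hcoeff : ∀ m : ℕ, PowerSeries.coeff (m + 2) (1 + 2 * 𝐭 ^ 2 * excursionSeries)
      = 2 * (g m 0 0 : ℚ) := fun m => by
    have h2 : (2 : PowerSeries ℚ) = PowerSeries.C 2 := (map_ofNat _ 2).symm
    rw [h2, mul_assoc, map_add, PowerSeries.coeff_C_mul, PowerSeries.coeff_X_pow_mul]
    simp [excursionSeries, PowerSeries.coeff_one]
  -- the coefficient of `t ^ (2n + 4)` involves `g (2n + 2)` and `g (2n)` only
  have key := congrArg (PowerSeries.coeff (2 * n + 2 + 2)) excursion_equation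
  set D : PowerSeries ℚ := 1 + 2 * 𝐭 ^ 2 * excursionSeries with hD
  have h16 : 16 * 𝐭 ^ 2 * (3 * euler (euler D) - 4 * euler D + D)
      = PowerSeries.C 16 * (𝐭 ^ 2 * (PowerSeries.C 3 * euler (euler D)
        - PowerSeries.C 4 * euler D + D)) := by
    simp only [map_ofNat]
    ring
  have h3 : 3 * euler (euler D) - 2 * euler D
      = PowerSeries.C 3 * euler (euler D) - PowerSeries.C 2 * euler D := by
    simp only [map_ofNat]
  rw [h16, h3] at key
  simp only [map_sub, map_add, PowerSeries.coeff_C_mul, PowerSeries.coeff_X_pow_mul, coeff_euler,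
    hcoeff] at key
  push_cast at key
  have : ((n + 2) * (3 * n + 5) * g (2 * n + 2) 0 0 : ℚ)
      = 4 * (6 * n + 5) * (2 * n + 1) * g (2 * n) 0 0 := by
    linear_combination key / 8
  exact_mod_cast this
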